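/- Let Γ be a planar lattice that is not rational but possesses a well-rounded sublattice, let R be a coincidence reflection of Γ, and let Σ = [Γ : Γ ∩ RΓ]. Let a_Γ(n) be the number of well-rounded sublattices of Γ of index n. Then the Dirichlet series F(s) = ∑_{n≥1} a_Γ(n) n^{−s} converges for Re(s) > 1, and there exists a function G, analytic on the open half plane {s ∈ ℂ : Re(s) > 1/2}, such that F(s) = G(s) + (log 3)/(4Σ) · 1/(s − 1) for all s with Re(s) > 1; in particular, F has an analytic continuation to {Re(s) > 1/2} with a single simple pole at s = 1 of residue (log 3)/(4Σ). -/

import Mathlib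

noncomputable section

open Filter Asymptotics
open scoped RealInnerProductSpace

/-- The Euclidean plane. -/
abbrev EucPlane : Type := EuclideanSpace ℝ (Fin 2)

/-- A planar lattice: the additive subgroup generated by two linearly independent vectors. -/
def IsPlanarLattice (Λ : AddSubgroup EucPlane) : Prop :=
  ∃ v₁ v₂ : EucPlane, LinearIndependent ℝ ![v₁, v₂] ∧ Λ = AddSubgroup.closure {v₁, v₂}

/-- A subgroup `Λ` of the plane is well-rounded if it contains two `ℝ`-linearly
independent vectors, both of minimal norm among the nonzero elements of `Λ`. -/
def IsWellRounded (Λ : AddSubgroup EucPlane) : Prop :=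
  ∃ x y : EucPlane, x ∈ Λ ∧ y ∈ Λ ∧ LinearIndependent ℝ ![x, y] ∧
    (∀ z ∈ Λ, z ≠ 0 → ‖x‖ ≤ ‖z‖) ∧ (∀ z ∈ Λ, z ≠ 0 → ‖y‖ ≤ ‖z‖)

/-- A planar lattice is rational if, after rescaling by some `c > 0`, all inner
products of lattice vectors are rational. -/
def IsRationalLattice (Γ : AddSubgroup EucPlane) : Prop :=
  ∃ c : ℝ, 0 < c ∧ ∀ v ∈ Γ, ∀ w ∈ Γ, ∃ q : ℚ, c * ⟪v, w⟫ = q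

/-- The image of `Γ` under the linear isometry `R`. -/
def latticeMap (R : EucPlane ≃ₗᵢ[ℝ] EucPlane) (Γ : AddSubgroup EucPlane) :
    AddSubgroup EucPlane :=
  Γ.map (R.toLinearEquiv : EucPlane →ₗ[ℝ] EucPlane).toAddMonoidHom

/-- `R` is a coincidence reflection of `Γ`: a linear isometry of determinant `-1`
such that `Γ ∩ RΓ` has finite index in `Γ`. -/
def IsCoincidenceReflection (Γ : AddSubgroup EucPlane) (R : EucPlane ≃ₗᵢ[ℝ] EucPlane) : Prop :=
  LinearMap.det (R.toLinearEquiv : EucPlane →ₗ[ℝ] EucPlane) = -1 ∧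
    ((Γ ⊓ latticeMap R Γ).addSubgroupOf Γ).index ≠ 0

/-- The number of well-rounded sublattices of `Γ` of index `n`. -/
def countWR (Γ : AddSubgroup EucPlane) (n : ℕ) : ℕ :=
  Nat.card {Λ : AddSubgroup EucPlane // Λ ≤ Γ ∧ IsWellRounded Λ ∧
    (Λ.addSubgroupOf Γ).index = n}

/-!
The reflection `R` fixes a lattice direction `x` and negates a lattice direction `y`. Every vector
of `Γ` has rational coordinates with respect to `x, y`, and since `Γ` is not rational, `‖x‖ ^ 2` and
`‖y‖ ^ 2` are linearly independent over `ℚ`. Hence the length of a lattice vector determines its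
coordinates up to signs, and two independent shortest vectors of a well-rounded sublattice are of
the form `k • x + l • y` and `k • x - l • y`, up to sign. They generate a rhombic lattice, which is
well-rounded exactly if `1 / √3 ≤ (l * ‖y‖) / (k * ‖x‖) ≤ √3` and whose index is proportional to
`k * l`. So the index count is a count of lattice points in a sector below a hyperbola, where
summing over the `O(√n)` rows leaves an error `O(√n)`. Abel summation turns the main term into the
pole and the error into a Mellin transform, which is holomorphic on `Re s > 1 / 2`.
-/

section DirichletSeries

open MeasureTheory Finset

/-- The error `∑_{k ≤ t} f k - c t` of approximating the summatory function of `f` by `c t`,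
cut off to `t > 1` so that it has a Mellin transform. -/
def summatoryError (f : ℕ → ℂ) (c : ℂ) : ℝ → ℂ :=
  (Set.Ioi 1).indicator fun t ↦ ∑ k ∈ Icc 1 ⌊t⌋₊, f k - c * t

variable {f : ℕ → ℂ} {c : ℂ} {θ : ℝ}

lemma locallyIntegrableOn_summatoryError :
    LocallyIntegrableOn (summatoryError f c) (Set.Ioi 0) := by
  have hsum : LocallyIntegrableOn (fun t : ℝ ↦ ∑ k ∈ Icc 1 ⌊t⌋₊, f k) (Set.Ici 0) := by
    simpa only [one_mul] using locallyIntegrableOn_mul_sum_Icc f (m := 1) le_rfl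
      ((locallyIntegrable_const (1 : ℂ)).locallyIntegrableOn (Set.Ici 0))
  have hlin : Continuous fun t : ℝ ↦ c * (t : ℂ) := by fun_prop
  refine (locallyIntegrableOn_iff isLocallyClosed_Ioi).2 fun K hK hKc ↦ ?_
  exact ((hsum.sub (hlin.locallyIntegrable.locallyIntegrableOn _)).integrableOn_compact_subset
    (hK.trans Set.Ioi_subset_Ici_self) hKc).indicator measurableSet_Ioi

lemma isBigO_rpow_of_sum_sub_isBigO (hθ : θ ≤ 1)
    (hf : (fun n : ℕ ↦ ∑ k ∈ Icc 1 n, f k - c * n) =O[atTop] fun n ↦ (n : ℝ) ^ θ) :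
    (fun n : ℕ ↦ ∑ k ∈ Icc 1 n, f k) =O[atTop] fun n ↦ (n : ℝ) ^ (1 : ℝ) := by
  have hpow : (fun n : ℕ ↦ (n : ℝ) ^ θ) =O[atTop] fun n ↦ (n : ℝ) ^ (1 : ℝ) :=
    .of_bound' <| (eventually_ge_atTop 1).mono fun n hn ↦ by
      have hn' : (1 : ℝ) ≤ n := Nat.one_le_cast.2 hn
      rw [Real.norm_of_nonneg (by positivity), Real.norm_of_nonneg (by positivity)]
      exact Real.rpow_le_rpow_of_exponent_le hn' hθ
  have hlin : (fun n : ℕ ↦ c * n) =O[atTop] fun n ↦ (n : ℝ) ^ (1 : ℝ) :=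
    .of_bound ‖c‖ <| .of_forall fun n ↦ by simp
  exact ((hf.trans hpow).add hlin).congr_left fun n ↦ sub_add_cancel _ _

lemma summatoryError_isBigO_rpow (hθ : 0 ≤ θ)
    (hf : (fun n : ℕ ↦ ∑ k ∈ Icc 1 n, f k - c * n) =O[atTop] fun n ↦ (n : ℝ) ^ θ) :
    summatoryError f c =O[atTop] fun t : ℝ ↦ t ^ θ := by
  have hfloor : (fun t : ℝ ↦ (⌊t⌋₊ : ℝ) ^ θ) =O[atTop] fun t ↦ t ^ θ := by
    refine .of_bound' ?_
    filter_upwards [eventually_ge_atTop 0] with t ht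
    rw [Real.norm_of_nonneg (by positivity), Real.norm_of_nonneg (by positivity)]
    exact Real.rpow_le_rpow (by positivity) (Nat.floor_le ht) hθ
  have hfract : (fun t : ℝ ↦ c * ((⌊t⌋₊ : ℂ) - t)) =O[atTop] fun t : ℝ ↦ t ^ θ := by
    refine .of_bound ‖c‖ ?_
    filter_upwards [eventually_ge_atTop 1] with t ht
    have hdist : ‖(⌊t⌋₊ : ℂ) - t‖ ≤ 1 := by
      rw [← Complex.ofReal_natCast, ← Complex.ofReal_sub, Complex.norm_real, Real.norm_eq_abs,
        abs_le]
      constructor <;> linarith [Nat.floor_le (zero_le_one.trans ht), Nat.lt_floor_add_one t]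
    rw [norm_mul, Real.norm_of_nonneg (by positivity)]
    exact mul_le_mul_of_nonneg_left (hdist.trans (Real.one_le_rpow ht hθ)) (norm_nonneg c)
  refine (((hf.comp_tendsto tendsto_nat_floor_atTop).trans hfloor).add hfract).congr' ?_ .rfl
  filter_upwards [eventually_gt_atTop 1] with t ht
  rw [summatoryError, Set.indicator_of_mem (Set.mem_Ioi.2 ht), Function.comp_apply]
  ring

lemma summatoryError_isBigO_nhdsGT_zero (g : ℝ → ℝ) :
    summatoryError f c =O[nhdsWithin 0 (Set.Ioi 0)] g := by
  refine .of_bound' ?_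
  filter_upwards [mem_nhdsWithin_of_mem_nhds (Iio_mem_nhds zero_lt_one)] with t ht
  rw [summatoryError, Set.indicator_of_notMem (Set.notMem_Ioi.2 ht.le), norm_zero]
  exact norm_nonneg _

lemma mellinConvergent_summatoryError (hE : summatoryError f c =O[atTop] fun t : ℝ ↦ t ^ θ)
    {s : ℂ} (hs : θ < s.re) : MellinConvergent (summatoryError f c) (-s) :=
  mellinConvergent_of_isBigO_rpow (a := -θ) locallyIntegrableOn_summatoryError
    (by simpa only [neg_neg] using hE) (by simpa using hs)
    (summatoryError_isBigO_nhdsGT_zero _) (sub_one_lt _)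

lemma differentiableAt_mellin_summatoryError
    (hE : summatoryError f c =O[atTop] fun t : ℝ ↦ t ^ θ) {s : ℂ} (hs : θ < s.re) :
    DifferentiableAt ℂ (mellin (summatoryError f c)) (-s) :=
  mellin_differentiableAt_of_isBigO_rpow (a := -θ) locallyIntegrableOn_summatoryError
    (by simpa only [neg_neg] using hE) (by simpa using hs)
    (summatoryError_isBigO_nhdsGT_zero _) (sub_one_lt _)

lemma cpow_smul_summatoryError (s : ℂ) :
    (fun t : ℝ ↦ (t : ℂ) ^ (-s - 1) • summatoryError f c t) = (Set.Ioi 1).indicator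
      fun t : ℝ ↦ (∑ k ∈ Icc 1 ⌊t⌋₊, f k) * (t : ℂ) ^ (-(s + 1)) - c * (t : ℂ) ^ (-s) := by
  ext t
  by_cases ht : t ∈ Set.Ioi 1
  · have ht0 : (t : ℂ) ≠ 0 := Complex.ofReal_ne_zero.2 (zero_lt_one.trans ht).ne'
    have hpow : (t : ℂ) ^ (-s) = (t : ℂ) ^ (-(s + 1)) * t := by
      conv_rhs => enter [2]; rw [← Complex.cpow_one (t : ℂ)]
      rw [← Complex.cpow_add _ _ ht0]
      ring_nf
    rw [summatoryError, Set.indicator_of_mem ht, Set.indicator_of_mem ht, smul_eq_mul, hpow,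
      show -s - 1 = -(s + 1) by ring]
    ring
  · rw [summatoryError, Set.indicator_of_notMem ht, Set.indicator_of_notMem ht, smul_zero]

lemma integral_sum_mul_cpow_eq_mellin (hθ : θ ≤ 1)
    (hE : summatoryError f c =O[atTop] fun t : ℝ ↦ t ^ θ) {s : ℂ} (hs : 1 < s.re) :
    ∫ t in Set.Ioi (1 : ℝ), (∑ k ∈ Icc 1 ⌊t⌋₊, f k) * (t : ℂ) ^ (-(s + 1)) =
      mellin (summatoryError f c) (-s) + c / (s - 1) := by
  have hs' : (-s).re < -1 := by simpa using hs
  have hinter : Set.Ioi (1 : ℝ) ∩ Set.Ioi 0 = Set.Ioi 1 :=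
    Set.inter_eq_left.2 (Set.Ioi_subset_Ioi zero_le_one)
  have hpole : IntegrableOn (fun t : ℝ ↦ c * (t : ℂ) ^ (-s)) (Set.Ioi 1) :=
    (integrableOn_Ioi_cpow_of_lt hs' zero_lt_one).const_mul c
  have hpole_eq : ∫ t in Set.Ioi (1 : ℝ), c * (t : ℂ) ^ (-s) = c / (s - 1) := by
    rw [integral_const_mul, integral_Ioi_cpow_of_lt hs' zero_lt_one, Complex.ofReal_one,
      Complex.one_cpow, neg_div, ← div_neg, neg_add, neg_neg, ← sub_eq_add_neg, mul_one_div]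
  have herr := mellinConvergent_summatoryError hE (hθ.trans_lt hs)
  rw [MellinConvergent, cpow_smul_summatoryError, IntegrableOn,
    integrable_indicator_iff measurableSet_Ioi, IntegrableOn,
    Measure.restrict_restrict measurableSet_Ioi, hinter] at herr
  rw [mellin, cpow_smul_summatoryError, setIntegral_indicator measurableSet_Ioi, Set.inter_comm,
    hinter, ← hpole_eq, ← integral_add herr hpole]
  simp only [sub_add_cancel]

/-- `∑ f n n⁻ˢ = s ∫₁^∞ (∑_{k ≤ t} f k) t⁻ˢ⁻¹ dt` by Abel summation; the linear part `c t` of the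
summatory function contributes `s c / (s - 1) = c + c / (s - 1)`, and the error contributes `s`
times its Mellin transform at `-s`. -/
theorem LSeries_eq_differentiableOn_add_pole (hθ₀ : 0 ≤ θ) (hθ₁ : θ ≤ 1)
    (hf : (fun n : ℕ ↦ ∑ k ∈ Icc 1 n, f k - c * n) =O[atTop] fun n ↦ (n : ℝ) ^ θ) :
    ∃ G : ℂ → ℂ, DifferentiableOn ℂ G {s | θ < s.re} ∧
      ∀ s : ℂ, 1 < s.re → LSeriesSummable f s → LSeries f s = G s + c / (s - 1) := by
  have hE := summatoryError_isBigO_rpow hθ₀ hf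
  refine ⟨fun s ↦ c + s * mellin (summatoryError f c) (-s), fun s hs ↦ ?_, fun s hs hsum ↦ ?_⟩
  · have hmellin := (differentiableAt_mellin_summatoryError hE hs).comp s
      differentiable_neg.differentiableAt
    exact ((differentiableAt_const c).add
      (differentiableAt_id.mul hmellin)).differentiableWithinAt
  · have hs1 : s - 1 ≠ 0 := sub_ne_zero.2 fun h ↦ by simp [h] at hs
    rw [LSeries_eq_mul_integral f zero_le_one hs hsum (isBigO_rpow_of_sum_sub_isBigO hθ₁ hf),
      integral_sum_mul_cpow_eq_mellin hθ₁ hE hs]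
    field_simp
    ring

lemma natCast_mul_cpow_neg_eq_term (a : ℕ → ℕ) {s : ℂ} (hs : s ≠ 0) :
    (fun n : ℕ ↦ (a n : ℂ) * (n : ℂ) ^ (-s)) = LSeries.term (fun n ↦ (a n : ℂ)) s := by
  ext n
  rcases eq_or_ne n 0 with rfl | hn
  · simp [hs]
  · rw [LSeries.term_of_ne_zero hn, Complex.cpow_neg, div_eq_mul_inv]

theorem dirichletSeries_summable_and_continuation {a : ℕ → ℕ} {c : ℝ} (hθ₀ : 0 ≤ θ) (hθ₁ : θ ≤ 1)
    (ha : (fun n : ℕ ↦ ∑ k ∈ Icc 1 n, (a k : ℝ) - c * n) =O[atTop] fun n ↦ (n : ℝ) ^ θ) :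
    (∀ s : ℂ, 1 < s.re → Summable fun n : ℕ ↦ (a n : ℂ) * (n : ℂ) ^ (-s)) ∧
    ∃ G : ℂ → ℂ, DifferentiableOn ℂ G {s | θ < s.re} ∧
      ∀ s : ℂ, 1 < s.re → ∑' n : ℕ, (a n : ℂ) * (n : ℂ) ^ (-s) = G s + c / (s - 1) := by
  have ha' : (fun n : ℕ ↦ ∑ k ∈ Icc 1 n, (a k : ℂ) - (c : ℂ) * n) =O[atTop]
      fun n ↦ (n : ℝ) ^ θ := by
    refine (Complex.isBigO_ofReal_left.2 ha).congr_left fun n ↦ ?_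
    push_cast
    rfl
  have hnorm : (fun n : ℕ ↦ ∑ k ∈ Icc 1 n, ‖(a k : ℂ)‖) =O[atTop] fun n ↦ (n : ℝ) ^ (1 : ℝ) :=
    (isBigO_rpow_of_sum_sub_isBigO hθ₁ ha').norm_left.congr_left fun n ↦ by
      simp only [← Nat.cast_sum, Complex.norm_natCast]
  have hsum (s : ℂ) (hs : 1 < s.re) : LSeriesSummable (fun n ↦ (a n : ℂ)) s :=
    LSeriesSummable_of_sum_norm_bigO hnorm zero_le_one hs
  have hne (s : ℂ) (hs : 1 < s.re) : s ≠ 0 := fun h ↦ absurd hs (by norm_num [h])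
  obtain ⟨G, hG, hGeq⟩ := LSeries_eq_differentiableOn_add_pole hθ₀ hθ₁ ha'
  refine ⟨fun s hs ↦ ?_, G, hG, fun s hs ↦ ?_⟩
  · rw [natCast_mul_cpow_neg_eq_term a (hne s hs)]
    exact hsum s hs
  · rw [natCast_mul_cpow_neg_eq_term a (hne s hs)]
    exact hGeq s hs (hsum s hs)

end DirichletSeries

section LatticePointsInSectors

open Finset Real

/-- The pairs `(k, l)` of positive integers congruent modulo `d` that lie in the sector
`α k ≤ l < β k`; they parametrize the well-rounded sublattices. For `α = 0` the lower
condition is void. -/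
def sectorPairs (d : ℕ) (α β : ℝ) : Set (ℕ × ℕ) :=
  {p | 0 < p.1 ∧ 0 < p.2 ∧ p.1 ≡ p.2 [MOD d] ∧ α * p.1 ≤ p.2 ∧ (p.2 : ℝ) < β * p.1}

lemma abs_card_Ioc_floor_filter_modEq_sub_le {d : ℕ} (hd : 0 < d) (l : ℕ) {A B : ℝ} (hA : 0 ≤ A)
    (hAB : A ≤ B) :
    |(#{k ∈ Ioc ⌊A⌋₊ ⌊B⌋₊ | k ≡ l [MOD d]} : ℝ) - (B - A) / d| ≤ 2 := by
  have hd₁ : (1 : ℝ) ≤ d := Nat.one_le_cast.2 hd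
  set u : ℝ := ((⌊A⌋₊ : ℝ) - l) / d with hu
  set v : ℝ := ((⌊B⌋₊ : ℝ) - l) / d with hv
  have huv : u ≤ v := by
    rw [hu, hv]
    gcongr
  have hcard : (#{k ∈ Ioc ⌊A⌋₊ ⌊B⌋₊ | k ≡ l [MOD d]} : ℤ) = ⌊v⌋ - ⌊u⌋ := by
    have hfloor (C : ℕ) : ⌊((C : ℚ) - l) / d⌋ = ⌊((C : ℝ) - l) / d⌋ := by
      rw [← Rat.floor_cast (α := ℝ)]; push_cast; rfl
    rw [Nat.Ioc_filter_modEq_card _ _ hd, hfloor, hfloor,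
      max_eq_left (sub_nonneg.2 (Int.floor_le_floor huv))]
  have hfract : |(v - u) - (⌊v⌋ - ⌊u⌋)| ≤ 1 := by
    rw [abs_le]
    constructor <;> linarith [Int.floor_le u, Int.lt_floor_add_one u, Int.floor_le v,
      Int.lt_floor_add_one v]
  have hlen : |(v - u) - (B - A) / d| ≤ 1 := by
    rw [hu, hv, ← sub_div, ← sub_div, abs_div, Nat.abs_cast, div_le_one (by positivity)]
    refine le_trans ?_ hd₁
    rw [abs_le]
    constructor <;> linarith [Nat.floor_le hA, Nat.lt_floor_add_one A, Nat.floor_le (hA.trans hAB),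
      Nat.lt_floor_add_one B]
  rw [← Int.cast_natCast, hcard, Int.cast_sub]
  rw [abs_le] at *
  constructor <;> linarith

lemma abs_harmonic_floor_sub_le {r : ℝ} (hr : 1 ≤ r) :
    |(harmonic ⌊r⌋₊ : ℝ) - (log r + eulerMascheroniConstant)| ≤ 2 / r := by
  have hL : 1 ≤ ⌊r⌋₊ := (Nat.one_le_floor_iff _).2 hr
  have hL₁ : (1 : ℝ) ≤ ⌊r⌋₊ := Nat.one_le_cast.2 hL
  have hLr : (⌊r⌋₊ : ℝ) ≤ r := Nat.floor_le (by positivity)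
  have hrL : r < ⌊r⌋₊ + 1 := Nat.lt_floor_add_one r
  have hlower := eulerMascheroniSeq_lt_eulerMascheroniConstant ⌊r⌋₊
  have hupper := eulerMascheroniConstant_lt_eulerMascheroniSeq' ⌊r⌋₊
  rw [eulerMascheroniSeq] at hlower
  rw [eulerMascheroniSeq', if_neg (by lia)] at hupper
  have hlogL : log ⌊r⌋₊ ≤ log r := log_le_log (by positivity) hLr
  have hlogL₁ : log r ≤ log (⌊r⌋₊ + 1) := log_le_log (by positivity) hrL.le
  have hgap : log (⌊r⌋₊ + 1) - log ⌊r⌋₊ ≤ 2 / r := calc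
    log (⌊r⌋₊ + 1) - log ⌊r⌋₊ = log ((⌊r⌋₊ + 1) / ⌊r⌋₊) :=
      (log_div (by positivity) (by positivity)).symm
    _ ≤ (⌊r⌋₊ + 1) / ⌊r⌋₊ - 1 := log_le_sub_one_of_pos (by positivity)
    _ = 1 / ⌊r⌋₊ := by field_simp; ring
    _ ≤ 2 / r := by rw [div_le_div_iff₀ (by positivity) (by positivity)]; linarith
  rw [abs_le]
  constructor <;> linarith

lemma abs_sum_sq_div_sub_self_sub_le {r : ℝ} (hr : 1 ≤ r) :
    |∑ l ∈ Icc 1 ⌊r⌋₊, (r ^ 2 / l - l) - r ^ 2 * (log r + eulerMascheroniConstant - 1 / 2)| ≤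
      3 * r := by
  have hLr : (⌊r⌋₊ : ℝ) ≤ r := Nat.floor_le (by positivity)
  have hrL : r < ⌊r⌋₊ + 1 := Nat.lt_floor_add_one r
  have hinv : ∑ l ∈ Icc 1 ⌊r⌋₊, r ^ 2 / (l : ℝ) = r ^ 2 * harmonic ⌊r⌋₊ := by
    simp only [harmonic_eq_sum_Icc, Rat.cast_sum, Rat.cast_inv, Rat.cast_natCast, mul_sum,
      div_eq_mul_inv]
  have hgauss (n : ℕ) : ∑ l ∈ Icc 1 n, (l : ℝ) = n * (n + 1) / 2 := by
    induction n with
    | zero => simp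
    | succ n ih => rw [sum_Icc_succ_top (by lia), ih]; push_cast; ring
  have hharm : |r ^ 2 * (harmonic ⌊r⌋₊ - (log r + eulerMascheroniConstant))| ≤ 2 * r := by
    rw [abs_mul, abs_of_nonneg (sq_nonneg r)]
    calc r ^ 2 * |(harmonic ⌊r⌋₊ : ℝ) - (log r + eulerMascheroniConstant)|
        ≤ r ^ 2 * (2 / r) := by gcongr; exact abs_harmonic_floor_sub_le hr
      _ = 2 * r := by field_simp
  have htri : |(⌊r⌋₊ * (⌊r⌋₊ + 1) / 2 : ℝ) - r ^ 2 / 2| ≤ r := by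
    rw [abs_le]
    constructor <;> nlinarith
  rw [sum_sub_distrib, hinv, hgauss]
  rw [abs_le] at *
  constructor <;> linarith

-- The hyperbola `k l = r ^ 2 / β` meets the line `l = β k` at height `l = r`, so only the rows
-- `l ≤ r` contribute.
lemma halfSector_mul_le_eq_image (d : ℕ) {β r : ℝ} (hβ : 0 < β) (hr : 0 ≤ r) :
    {p ∈ sectorPairs d 0 β | (p.1 * p.2 : ℝ) ≤ r ^ 2 / β} =
      ((Icc 1 ⌊r⌋₊).sigma fun l ↦
        {k ∈ Ioc ⌊(l : ℝ) / β⌋₊ ⌊r ^ 2 / β / l⌋₊ | k ≡ l [MOD d]}).image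
          fun q ↦ (q.2, q.1) := by
  ext ⟨k, l⟩
  simp only [sectorPairs, Set.mem_ofPred_eq, coe_image, Set.mem_image, mem_coe, mem_sigma, mem_Icc,
    mem_filter, mem_Ioc, Sigma.exists, Prod.mk.injEq, zero_mul, Nat.cast_nonneg, true_and]
  constructor
  · rintro ⟨⟨hk, hl, hkl, hlt⟩, hle⟩
    have hl' : (0 : ℝ) < l := Nat.cast_pos.2 hl
    refine ⟨l, k, ⟨⟨hl, Nat.le_floor ?_⟩, ⟨?_, ?_⟩, hkl⟩, rfl, rfl⟩
    · rw [le_div_iff₀ hβ] at hle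
      nlinarith
    · rwa [Nat.floor_lt (by positivity), div_lt_iff₀' hβ]
    · exact Nat.le_floor ((le_div_iff₀ hl').2 hle)
  · rintro ⟨l, k, ⟨⟨hl, -⟩, ⟨hlt, hle⟩, hkl⟩, rfl, rfl⟩
    have hl' : (0 : ℝ) < l := Nat.cast_pos.2 hl
    rw [Nat.floor_lt (by positivity), div_lt_iff₀' hβ] at hlt
    rw [Nat.le_floor_iff (by positivity), le_div_iff₀ hl'] at hle
    refine ⟨⟨Nat.cast_pos.1 (pos_of_mul_pos_right (hl'.trans hlt) hβ.le), hl, hkl, hlt⟩, hle⟩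

lemma abs_ncard_halfSector_sub_le {d : ℕ} (hd : 0 < d) {β r : ℝ} (hβ : 0 < β) (hr : 1 ≤ r) :
    |({p ∈ sectorPairs d 0 β | (p.1 * p.2 : ℝ) ≤ r ^ 2 / β}.ncard : ℝ) -
      r ^ 2 / (β * d) * (log r + eulerMascheroniConstant - 1 / 2)| ≤ (3 / (β * d) + 2) * r := by
  have hβd : 0 < β * d := by positivity
  set card : ℕ → ℝ := fun l ↦ #{k ∈ Ioc ⌊(l : ℝ) / β⌋₊ ⌊r ^ 2 / β / l⌋₊ | k ≡ l [MOD d]}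
  have hncard : ({p ∈ sectorPairs d 0 β | (p.1 * p.2 : ℝ) ≤ r ^ 2 / β}.ncard : ℝ) =
      ∑ l ∈ Icc 1 ⌊r⌋₊, card l := by
    rw [halfSector_mul_le_eq_image d hβ (by positivity), Set.ncard_coe_finset,
      card_image_of_injective, card_sigma, Nat.cast_sum]
    rintro ⟨l, k⟩ ⟨l', k'⟩ h
    simp_all
  have hrow (l : ℕ) (hl : l ∈ Icc 1 ⌊r⌋₊) : |card l - (r ^ 2 / l - l) / (β * d)| ≤ 2 := by
    rw [mem_Icc] at hl
    have hl₀ : (0 : ℝ) < l := Nat.cast_pos.2 hl.1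
    have hlr : (l : ℝ) ≤ r := (Nat.le_floor_iff (by positivity)).1 hl.2
    have hlen : (r ^ 2 / l - l) / (β * d) = (r ^ 2 / β / l - l / β) / d := by field_simp
    rw [hlen]
    refine abs_card_Ioc_floor_filter_modEq_sub_le hd l (by positivity) ?_
    rw [div_right_comm]
    gcongr
    rw [le_div_iff₀ hl₀]
    nlinarith
  have hsum : |∑ l ∈ Icc 1 ⌊r⌋₊, card l - (∑ l ∈ Icc 1 ⌊r⌋₊, (r ^ 2 / l - l)) / (β * d)| ≤
      2 * r := calc
    _ = |∑ l ∈ Icc 1 ⌊r⌋₊, (card l - (r ^ 2 / l - l) / (β * d))| := by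
      rw [sum_div, ← sum_sub_distrib]
    _ ≤ ∑ _l ∈ Icc 1 ⌊r⌋₊, (2 : ℝ) := (abs_sum_le_sum_abs _ _).trans (sum_le_sum hrow)
    _ = 2 * ⌊r⌋₊ := by simp [mul_comm]
    _ ≤ 2 * r := by gcongr; exact Nat.floor_le (by positivity)
  have hmain : |(∑ l ∈ Icc 1 ⌊r⌋₊, (r ^ 2 / l - l)) / (β * d) -
      r ^ 2 / (β * d) * (log r + eulerMascheroniConstant - 1 / 2)| ≤ 3 / (β * d) * r := by
    rw [div_mul_eq_mul_div, ← sub_div, abs_div, abs_of_pos hβd, div_mul_eq_mul_div]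
    gcongr
    exact abs_sum_sq_div_sub_self_sub_le hr
  rw [hncard]
  rw [abs_le] at *
  constructor <;> linarith

lemma ncard_halfSector_sub_isBigO_sqrt {d : ℕ} (hd : 0 < d) {β : ℝ} (hβ : 0 < β) :
    (fun Y : ℝ ↦ ({p ∈ sectorPairs d 0 β | (p.1 * p.2 : ℝ) ≤ Y}.ncard : ℝ) -
      Y / d * (log √(β * Y) + eulerMascheroniConstant - 1 / 2)) =O[atTop] sqrt := by
  refine .of_bound ((3 / (β * d) + 2) * √β) ?_
  filter_upwards [eventually_ge_atTop (1 / β)] with Y hY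
  rw [div_le_iff₀' hβ] at hY
  have hY₀ : 0 ≤ β * Y := by linarith
  have hbound := abs_ncard_halfSector_sub_le hd hβ (one_le_sqrt.2 hY)
  rw [sq_sqrt hY₀, mul_div_cancel_left₀ _ hβ.ne', mul_div_mul_left _ _ hβ.ne'] at hbound
  rwa [norm_of_nonneg (sqrt_nonneg Y), mul_assoc, ← sqrt_mul hβ.le]

lemma finite_sectorPairs_mul_le (d : ℕ) (α β Y : ℝ) :
    {p ∈ sectorPairs d α β | (p.1 * p.2 : ℝ) ≤ Y}.Finite := by
  refine ((Set.finite_Iic ⌊Y⌋₊).prod (Set.finite_Iic ⌊Y⌋₊)).subset ?_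
  rintro ⟨k, l⟩ ⟨⟨hk, hl, -⟩, hle⟩
  have hprod : k * l ≤ ⌊Y⌋₊ := Nat.le_floor (by exact_mod_cast hle)
  exact ⟨(Nat.le_mul_of_pos_right k hl).trans hprod, (Nat.le_mul_of_pos_left l hk).trans hprod⟩

lemma ncard_sectorPairs_eq_sub (d : ℕ) {α β : ℝ} (hαβ : α ≤ β) (Y : ℝ) :
    ({p ∈ sectorPairs d α β | (p.1 * p.2 : ℝ) ≤ Y}.ncard : ℝ) =
      {p ∈ sectorPairs d 0 β | (p.1 * p.2 : ℝ) ≤ Y}.ncard -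
        {p ∈ sectorPairs d 0 α | (p.1 * p.2 : ℝ) ≤ Y}.ncard := by
  have hsub : {p ∈ sectorPairs d 0 α | (p.1 * p.2 : ℝ) ≤ Y} ⊆
      {p ∈ sectorPairs d 0 β | (p.1 * p.2 : ℝ) ≤ Y} := by
    rintro ⟨k, l⟩ ⟨⟨hk, hl, hkl, h₀, hlt⟩, hle⟩
    exact ⟨⟨hk, hl, hkl, h₀, hlt.trans_le (by gcongr)⟩, hle⟩
  have hdiff : {p ∈ sectorPairs d α β | (p.1 * p.2 : ℝ) ≤ Y} =
      {p ∈ sectorPairs d 0 β | (p.1 * p.2 : ℝ) ≤ Y} \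
        {p ∈ sectorPairs d 0 α | (p.1 * p.2 : ℝ) ≤ Y} := by
    ext ⟨k, l⟩
    simp only [sectorPairs, Set.mem_ofPred_eq, Set.mem_sdiff, zero_mul, Nat.cast_nonneg, true_and]
    rw [← not_lt (b := α * (k : ℝ))]
    tauto
  rw [hdiff, Set.ncard_sdiff hsub (finite_sectorPairs_mul_le ..),
    Nat.cast_sub (Set.ncard_le_ncard hsub (finite_sectorPairs_mul_le ..))]

theorem ncard_sectorPairs_sub_isBigO_sqrt {d : ℕ} (hd : 0 < d) {α β : ℝ} (hα : 0 < α)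
    (hαβ : α ≤ β) :
    (fun Y : ℝ ↦ ({p ∈ sectorPairs d α β | (p.1 * p.2 : ℝ) ≤ Y}.ncard : ℝ) -
      log (β / α) / (2 * d) * Y) =O[atTop] sqrt := by
  have hβ := hα.trans_le hαβ
  refine ((ncard_halfSector_sub_isBigO_sqrt hd hβ).sub
    (ncard_halfSector_sub_isBigO_sqrt hd hα)).congr' ?_ .rfl
  filter_upwards [eventually_gt_atTop 0] with Y hY
  rw [ncard_sectorPairs_eq_sub d hαβ, log_sqrt (by positivity), log_sqrt (by positivity),
    log_mul hβ.ne' hY.ne', log_mul hα.ne' hY.ne', log_div hβ.ne' hα.ne']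
  field_simp
  ring

lemma sum_ncard_fiber_eq_ncard_le {ι : Type*} {S : Set ι} {f : ι → ℕ} (hf : ∀ p ∈ S, 0 < f p)
    {n : ℕ} (hfin : {p ∈ S | f p ≤ n}.Finite) :
    ∑ m ∈ Icc 1 n, {p ∈ S | f p = m}.ncard = {p ∈ S | f p ≤ n}.ncard := by
  classical
  have hmaps : Set.MapsTo f hfin.toFinset (Icc 1 n) := fun p hp ↦ by
    have hp' := hfin.mem_toFinset.1 hp
    exact mem_coe.2 (mem_Icc.2 ⟨hf p hp'.1, hp'.2⟩)
  rw [Set.ncard_eq_toFinset_card _ hfin, card_eq_sum_card_fiberwise hmaps]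
  refine sum_congr rfl fun m hm ↦ ?_
  rw [← Set.ncard_coe_finset]
  congr 1
  ext p
  simp only [Set.mem_ofPred_eq, coe_filter, hfin.mem_toFinset]
  exact ⟨fun h ↦ ⟨⟨h.1, h.2.trans_le (mem_Icc.1 hm).2⟩, h.2⟩, fun h ↦ ⟨h.1.1, h.2⟩⟩

theorem sum_ncard_sectorPairs_sub_isBigO {d e : ℕ} (hd : 0 < d) (he : 0 < e) {α β : ℝ}
    (hα : 0 < α) (hαβ : α ≤ β) :
    (fun n : ℕ ↦ ∑ m ∈ Icc 1 n, ({p ∈ sectorPairs d α β | e * (p.1 * p.2) = m}.ncard : ℝ) -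
      log (β / α) / (2 * d * e) * n) =O[atTop] fun n ↦ (n : ℝ) ^ (1 / 2 : ℝ) := by
  have he' : (0 : ℝ) < e := Nat.cast_pos.2 he
  have htendsto : Tendsto (fun n : ℕ ↦ (n : ℝ) / e) atTop atTop :=
    tendsto_natCast_atTop_atTop.atTop_div_const he'
  have hsum (n : ℕ) :
      ∑ m ∈ Icc 1 n, ({p ∈ sectorPairs d α β | e * (p.1 * p.2) = m}.ncard : ℝ) =
        {p ∈ sectorPairs d α β | (p.1 * p.2 : ℝ) ≤ n / e}.ncard := by
    have hset : {p ∈ sectorPairs d α β | e * (p.1 * p.2) ≤ n} =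
        {p ∈ sectorPairs d α β | (p.1 * p.2 : ℝ) ≤ n / e} := by
      ext p
      rw [Set.mem_ofPred_eq, Set.mem_ofPred_eq, le_div_iff₀' he']
      norm_cast
    rw [← Nat.cast_sum, sum_ncard_fiber_eq_ncard_le, hset]
    · exact fun p hp ↦ Nat.mul_pos he (Nat.mul_pos hp.1 hp.2.1)
    · exact hset ▸ finite_sectorPairs_mul_le ..
  have hsqrt : (fun n : ℕ ↦ √((n : ℝ) / e)) =O[atTop] fun n : ℕ ↦ (n : ℝ) ^ (1 / 2 : ℝ) := by
    refine .of_bound' (.of_forall fun n ↦ ?_)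
    rw [← sqrt_eq_rpow, norm_of_nonneg (sqrt_nonneg _), norm_of_nonneg (sqrt_nonneg _)]
    exact sqrt_le_sqrt (div_le_self n.cast_nonneg (Nat.one_le_cast.2 he))
  refine (((ncard_sectorPairs_sub_isBigO_sqrt hd hα hαβ).comp_tendsto htendsto).trans
    hsqrt).congr_left fun n ↦ ?_
  have hmain : log (β / α) / (2 * d) * (n / e) = log (β / α) / (2 * d * e) * n := by field_simp
  rw [hsum, Function.comp_apply, hmain]

end LatticePointsInSectors

section CongruenceLattices

open AddSubgroup

theorem relIndex_closure_range_eq_natAbs_det {E ι : Type*} [AddCommGroup E] [Fintype ι]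
    [DecidableEq ι] {v : ι → E} (hv : LinearIndependent ℤ v) {A : Matrix ι ι ℤ} (hA : A.det ≠ 0) :
    (closure (Set.range fun i ↦ ∑ j, A i j • v j)).relIndex (closure (Set.range v)) =
      A.det.natAbs := by
  have hw : LinearIndependent ℤ fun i ↦ ∑ j, A i j • v j :=
    (A.linearIndependent_rows_of_det_ne_zero hA).map' (Fintype.linearCombination ℤ v)
      (LinearMap.ker_eq_bot.2 hv.fintypeLinearCombination_injective)
  have hle : closure (Set.range fun i ↦ ∑ j, A i j • v j) ≤ closure (Set.range v) := by
    rw [closure_le]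
    rintro _ ⟨i, rfl⟩
    exact sum_mem fun j _ ↦ zsmul_mem (subset_closure (Set.mem_range_self j)) _
  let b := (Module.Basis.span hv).map (LinearEquiv.ofEq _ _ (toIntSubmodule_closure _).symm)
  have hb : (fun i ↦ (⟨∑ j, A i j • v j, hle (subset_closure (Set.mem_range_self i))⟩ :
      toIntSubmodule (closure (Set.range v)))) = fun i ↦ ∑ j, A i j • b j := by
    ext i
    simp [b, Module.Basis.span_apply]
  have hrepr : b.toMatrix (fun i ↦ ∑ j, A i j • b j) = A.transpose := by
    ext i j
    rw [Module.Basis.toMatrix_apply, Module.Basis.repr_sum_self, Matrix.transpose_apply]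
  rw [relIndex_eq_natAbs_det _ _ hle
    ((Module.Basis.span hw).map (LinearEquiv.ofEq _ _ (toIntSubmodule_closure _).symm)) b]
  simp only [Module.Basis.map_apply, LinearEquiv.coe_ofEq_apply, Module.Basis.span_apply]
  rw [hb, Module.Basis.det_apply, hrepr, Matrix.det_transpose]

variable {V : Type*} [AddCommGroup V] [Module ℝ V]

theorem mem_closure_pair_iff_intCast_smul {x y z : V} :
    z ∈ closure {x, y} ↔ ∃ m n : ℤ, z = (m : ℝ) • x + (n : ℝ) • y := by
  simp only [AddSubgroup.mem_closure_pair, Int.cast_smul_eq_zsmul, eq_comm]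

theorem intCast_smul_mem {Γ : AddSubgroup V} {x : V} (hx : x ∈ Γ) (m : ℤ) : (m : ℝ) • x ∈ Γ := by
  rw [Int.cast_smul_eq_zsmul]
  exact Γ.zsmul_mem hx m

/-- The lattice of all `k • x + l • y` with integers `k ≡ l` modulo `d`. For orthogonal `x` and `y`
it is rectangular if `d = 1`, and rhombic with diagonals `2 • x` and `2 • y` if `d = 2`. -/
def congruenceLattice (d : ℕ) (x y : V) : AddSubgroup V :=
  closure {x + y, (d : ℝ) • y}

variable {d : ℕ} {x y z : V}

theorem mem_congruenceLattice_iff : z ∈ congruenceLattice d x y ↔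
    ∃ k l : ℤ, k ≡ l [ZMOD d] ∧ z = (k : ℝ) • x + (l : ℝ) • y := by
  rw [congruenceLattice, mem_closure_pair_iff_intCast_smul]
  constructor
  · rintro ⟨m, n, rfl⟩
    refine ⟨m, m + d * n, (Int.modEq_iff_dvd.2 ⟨n, by ring⟩), ?_⟩
    push_cast
    module
  · rintro ⟨k, l, hkl, rfl⟩
    obtain ⟨n, hn⟩ := hkl.dvd
    obtain rfl : l = k + d * n := by linarith
    refine ⟨k, n, ?_⟩
    push_cast
    module

theorem closure_add_sub_eq_congruenceLattice (x y : V) :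
    closure {x + y, x - y} = congruenceLattice 2 x y := by
  refine le_antisymm ((closure_le _).2 ?_) ((closure_le _).2 ?_)
  · rintro _ (rfl | rfl)
    · exact mem_congruenceLattice_iff.2 ⟨1, 1, rfl, by simp⟩
    · exact mem_congruenceLattice_iff.2 ⟨1, -1, by decide, by simp [sub_eq_add_neg]⟩
  · rintro _ (rfl | rfl)
    · exact subset_closure (by simp)
    · exact mem_closure_pair_iff_intCast_smul.2 ⟨1, -1, by push_cast; module⟩

theorem congruenceLattice_smul_le {k l : ℕ} (hkl : k ≡ l [MOD d]) (hd : d ∣ 2) :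
    congruenceLattice 2 ((k : ℝ) • x) ((l : ℝ) • y) ≤ congruenceLattice d x y := by
  intro z hz
  obtain ⟨p, q, hpq, rfl⟩ := mem_congruenceLattice_iff.1 hz
  have hpq' : p ≡ q [ZMOD d] := hpq.of_dvd (mod_cast hd)
  refine mem_congruenceLattice_iff.2
    ⟨p * k, q * l, hpq'.mul (Int.natCast_modEq_iff.2 hkl), ?_⟩
  push_cast
  module

theorem congruenceLattice_two_neg_left (x y : V) :
    congruenceLattice 2 (-x) y = congruenceLattice 2 x y := by
  have neg_left_le (x : V) : congruenceLattice 2 (-x) y ≤ congruenceLattice 2 x y := by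
    intro z hz
    obtain ⟨k, l, hkl, rfl⟩ := mem_congruenceLattice_iff.1 hz
    refine mem_congruenceLattice_iff.2 ⟨-k, l, ?_, by push_cast; module⟩
    rw [Int.ModEq] at hkl ⊢
    omega
  exact (neg_left_le x).antisymm (by simpa only [neg_neg] using neg_left_le (-x))

theorem congruenceLattice_two_neg_right (x y : V) :
    congruenceLattice 2 x (-y) = congruenceLattice 2 x y := by
  rw [← closure_add_sub_eq_congruenceLattice, ← closure_add_sub_eq_congruenceLattice,
    sub_neg_eq_add, ← sub_eq_add_neg, Set.pair_comm]

theorem congruenceLattice_two_natAbs_smul (k l : ℤ) (x y : V) :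
    congruenceLattice 2 ((k.natAbs : ℝ) • x) ((l.natAbs : ℝ) • y) =
      congruenceLattice 2 ((k : ℝ) • x) ((l : ℝ) • y) := by
  rw [Nat.cast_natAbs, Nat.cast_natAbs, Int.cast_abs, Int.cast_abs]
  rcases abs_choice (k : ℝ) with hk | hk <;> rcases abs_choice (l : ℝ) with hl | hl <;>
    simp only [hk, hl, neg_smul, congruenceLattice_two_neg_left, congruenceLattice_two_neg_right]

theorem relIndex_congruenceLattice_smul (hxy : LinearIndependent ℝ ![x, y]) (hd : d ≠ 0)
    {k l : ℕ} (hk : k ≠ 0) (hl : l ≠ 0) :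
    (congruenceLattice d ((k : ℝ) • x) ((l : ℝ) • y)).relIndex (closure {x, y}) = d * (k * l) := by
  have hdet : !![(k : ℤ), l; 0, d * l].det = (d * (k * l) : ℕ) := by
    rw [Matrix.det_fin_two_of]
    push_cast
    ring
  have hindex := relIndex_closure_range_eq_natAbs_det
    (hxy.restrict_scalars (R := ℤ) (by simpa using Int.cast_injective))
    (A := !![(k : ℤ), l; 0, d * l]) (by rw [hdet]; positivity)
  rw [hdet, Int.natAbs_natCast] at hindex
  rw [← hindex, congruenceLattice]
  congr
  · ext z
    simp [Fin.exists_fin_two, eq_comm, smul_smul, ← Int.cast_smul_eq_zsmul ℝ]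
  · simp [Set.pair_comm]

end CongruenceLattices

section MinimalVectors

/-- A shortest nonzero vector of the subgroup `Λ`. -/
structure IsMinimalVector {V : Type*} [NormedAddCommGroup V] (Λ : AddSubgroup V) (x : V) :
    Prop where
  mem : x ∈ Λ
  ne_zero : x ≠ 0
  norm_le : ∀ z ∈ Λ, z ≠ 0 → ‖x‖ ≤ ‖z‖

theorem IsMinimalVector.norm_eq {V : Type*} [NormedAddCommGroup V] {Λ : AddSubgroup V} {x y : V}
    (hx : IsMinimalVector Λ x) (hy : IsMinimalVector Λ y) : ‖x‖ = ‖y‖ :=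
  (hx.norm_le y hy.mem hy.ne_zero).antisymm (hy.norm_le x hx.mem hx.ne_zero)

theorem isWellRounded_iff {Λ : AddSubgroup EucPlane} : IsWellRounded Λ ↔
    ∃ x y, IsMinimalVector Λ x ∧ IsMinimalVector Λ y ∧ LinearIndependent ℝ ![x, y] :=
  ⟨fun ⟨x, y, hx, hy, hxy, hx', hy'⟩ ↦
    ⟨x, y, ⟨hx, hxy.ne_zero 0, hx'⟩, ⟨hy, hxy.ne_zero 1, hy'⟩, hxy⟩,
  fun ⟨x, y, hx, hy, hxy⟩ ↦ ⟨x, y, hx.mem, hy.mem, hxy, hx.norm_le, hy.norm_le⟩⟩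

theorem exists_eq_smul_add_smul {K V : Type*} [DivisionRing K] [AddCommGroup V] [Module K V]
    (hV : Module.finrank K V = 2) {x y : V} (hxy : LinearIndependent K ![x, y]) (z : V) :
    ∃ s t : K, z = s • x + t • y := by
  have hz : z ∈ Submodule.span K (Set.range ![x, y]) := by
    have : FiniteDimensional K V := Module.finite_of_finrank_eq_succ hV
    rw [hxy.span_eq_top_of_card_eq_finrank' (by simp [hV])]
    trivial
  rw [Matrix.range_cons_cons_empty, Submodule.mem_span_pair] at hz
  obtain ⟨s, t, hst⟩ := hz
  exact ⟨s, t, hst.symm⟩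

variable {V : Type*} [NormedAddCommGroup V] [InnerProductSpace ℝ V] {x y : V}

theorem norm_smul_add_smul_lt_of_abs_le_half (hxy : LinearIndependent ℝ ![x, y])
    (hnorm : ‖x‖ = ‖y‖) {s t : ℝ} (hs : |s| ≤ 1 / 2) (ht : |t| ≤ 1 / 2) :
    ‖s • x + t • y‖ < ‖x‖ := by
  have hx : 0 < ‖x‖ := norm_pos_iff.2 (hxy.ne_zero 0)
  have hle : ‖s • x‖ + ‖t • y‖ ≤ ‖x‖ := by
    rw [norm_smul, norm_smul, Real.norm_eq_abs, Real.norm_eq_abs, ← hnorm]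
    nlinarith
  rcases eq_or_ne s 0 with rfl | hs₀
  · rw [zero_smul, zero_add, norm_smul, Real.norm_eq_abs, ← hnorm]
    nlinarith
  rcases eq_or_ne t 0 with rfl | ht₀
  · rw [zero_smul, add_zero, norm_smul, Real.norm_eq_abs]
    nlinarith
  have hli : LinearIndependent ℝ ![s • x, t • y] := by
    have := (LinearIndependent.pair_add_smul_add_smul_iff (x := x) (y := y) s 0 0 t).2
      ⟨hxy, by simp [hs₀, ht₀]⟩
    simpa using this
  exact (norm_add_lt_of_not_sameRay fun h ↦
    sameRay_or_sameRay_neg_iff_not_linearIndependent.1 (Or.inl h) hli).trans_le hle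

theorem IsMinimalVector.eq_closure_pair {Λ : AddSubgroup V} (hV : Module.finrank ℝ V = 2)
    (hx : IsMinimalVector Λ x) (hy : IsMinimalVector Λ y) (hxy : LinearIndependent ℝ ![x, y]) :
    Λ = AddSubgroup.closure {x, y} := by
  refine le_antisymm (fun z hz ↦ ?_) ?_
  · obtain ⟨s, t, rfl⟩ := exists_eq_smul_add_smul hV hxy z
    set r := (s - round s) • x + (t - round t) • y with hr
    have hdecomp : s • x + t • y = r + ((round s : ℝ) • x + (round t : ℝ) • y) := by module
    have hround := Λ.add_mem (intCast_smul_mem hx.mem (round s)) (intCast_smul_mem hy.mem (round t))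
    have hr_mem : r ∈ Λ := by
      rw [hdecomp] at hz
      exact (Λ.add_mem_cancel_right hround).1 hz
    have hr_lt : ‖r‖ < ‖x‖ := norm_smul_add_smul_lt_of_abs_le_half hxy (hx.norm_eq hy)
      (abs_sub_round s) (abs_sub_round t)
    have hr_zero : r = 0 := by
      by_contra hr₀
      exact (hx.norm_le r hr_mem hr₀).not_gt hr_lt
    rw [hdecomp, hr_zero, zero_add]
    exact mem_closure_pair_iff_intCast_smul.2 ⟨_, _, rfl⟩
  · rw [AddSubgroup.closure_le]
    rintro z (rfl | rfl)
    exacts [hx.mem, hy.mem]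

theorem norm_smul_add_smul_sq_of_inner_eq_zero (hxy : ⟪x, y⟫ = 0) (s t : ℝ) :
    ‖s • x + t • y‖ ^ 2 = s ^ 2 * ‖x‖ ^ 2 + t ^ 2 * ‖y‖ ^ 2 := by
  rw [norm_add_sq_real, real_inner_smul_left, real_inner_smul_right, hxy, norm_smul, norm_smul,
    mul_pow, mul_pow, Real.norm_eq_abs, Real.norm_eq_abs, sq_abs, sq_abs]
  ring

theorem add_le_sq_mul_add_sq_mul {X Y : ℝ} (hX : 0 ≤ X) (hY : 0 ≤ Y) (hXY : X ≤ 3 * Y)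
    (hYX : Y ≤ 3 * X) {k l : ℤ} (hkl : k ≡ l [ZMOD 2]) (h : ¬(k = 0 ∧ l = 0)) :
    X + Y ≤ (k : ℝ) ^ 2 * X + (l : ℝ) ^ 2 * Y := by
  have one_le_sq {m : ℤ} (hm : m ≠ 0) : (1 : ℝ) ≤ (m : ℝ) ^ 2 :=
    mod_cast (one_le_sq_iff_one_le_abs _).2 (Int.one_le_abs hm)
  have four_le_sq {m : ℤ} (hm : m ≠ 0) (hm' : m ≡ 0 [ZMOD 2]) : (4 : ℝ) ≤ (m : ℝ) ^ 2 := by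
    obtain ⟨j, rfl⟩ := Int.modEq_zero_iff_dvd.1 hm'
    have hj : j ≠ 0 := right_ne_zero_of_mul hm
    push_cast
    linarith [one_le_sq hj, mul_pow (2 : ℝ) j 2]
  rcases eq_or_ne k 0 with rfl | hk
  · nlinarith [four_le_sq (by simpa using h) hkl.symm]
  rcases eq_or_ne l 0 with rfl | hl
  · nlinarith [four_le_sq hk hkl]
  nlinarith [one_le_sq hk, one_le_sq hl]

theorem isMinimalVector_add_iff (hxy : ⟪x, y⟫ = 0) (hx : x ≠ 0) (hy : y ≠ 0) :
    IsMinimalVector (congruenceLattice 2 x y) (x + y) ↔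
      ‖x‖ ^ 2 ≤ 3 * ‖y‖ ^ 2 ∧ ‖y‖ ^ 2 ≤ 3 * ‖x‖ ^ 2 := by
  have hadd : ‖x + y‖ ^ 2 = ‖x‖ ^ 2 + ‖y‖ ^ 2 := by
    simpa using norm_smul_add_smul_sq_of_inner_eq_zero hxy 1 1
  constructor
  · intro h
    have hx2 : ‖x + y‖ ≤ ‖(2 : ℝ) • x‖ := h.norm_le _
      (mem_congruenceLattice_iff.2 ⟨2, 0, by decide, by simp⟩) (smul_ne_zero two_ne_zero hx)
    have hy2 : ‖x + y‖ ≤ ‖(2 : ℝ) • y‖ := h.norm_le _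
      (mem_congruenceLattice_iff.2 ⟨0, 2, by decide, by simp⟩) (smul_ne_zero two_ne_zero hy)
    rw [← sq_le_sq₀ (norm_nonneg _) (norm_nonneg _), hadd, norm_smul, Real.norm_ofNat] at hx2 hy2
    constructor <;> linarith
  · rintro ⟨hXY, hYX⟩
    refine ⟨mem_congruenceLattice_iff.2 ⟨1, 1, rfl, by simp⟩, fun h₀ ↦ ?_, fun z hz hz₀ ↦ ?_⟩
    · rw [h₀, norm_zero] at hadd
      have : 0 < ‖x‖ ^ 2 := by positivity
      nlinarith [sq_nonneg ‖y‖]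
    obtain ⟨k, l, hkl, rfl⟩ := mem_congruenceLattice_iff.1 hz
    rw [← sq_le_sq₀ (norm_nonneg _) (norm_nonneg _), hadd,
      norm_smul_add_smul_sq_of_inner_eq_zero hxy]
    refine add_le_sq_mul_add_sq_mul (sq_nonneg _) (sq_nonneg _) hXY hYX hkl ?_
    contrapose! hz₀
    rw [hz₀.1, hz₀.2, Int.cast_zero, zero_smul, zero_smul, add_zero]

end MinimalVectors

section ReflectionFrames

open LinearMap (adjoint)

section Orthogonal

variable {V : Type*} [NormedAddCommGroup V] [InnerProductSpace ℝ V] [FiniteDimensional ℝ V]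

theorem det_adjoint (f : V →ₗ[ℝ] V) : LinearMap.det (adjoint f) = LinearMap.det f := by
  let b := stdOrthonormalBasis ℝ V
  rw [← LinearMap.det_toMatrix b.toBasis, ← LinearMap.det_toMatrix b.toBasis,
    LinearMap.toMatrix_adjoint, Matrix.det_conjTranspose, star_trivial]

theorem exists_apply_eq_neg_of_det_eq_neg_one {f : V →ₗ[ℝ] V} (hf : f * adjoint f = 1)
    (hdet : LinearMap.det f = -1) : ∃ v ≠ 0, f v = -v := by
  have hfactor : f + 1 = f * adjoint (f + 1) := by
    rw [map_add, LinearMap.adjoint_one, mul_add, hf, mul_one, add_comm]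
  have hdet_add : LinearMap.det (f + 1) = 0 := by
    have := congrArg LinearMap.det hfactor
    rw [map_mul, det_adjoint, hdet] at this
    linarith
  obtain ⟨v, hv, hv₀⟩ := Submodule.exists_mem_ne_zero_of_ne_bot
    (LinearMap.bot_lt_ker_of_det_eq_zero hdet_add).ne'
  exact ⟨v, hv₀, eq_neg_of_add_eq_zero_left (by simpa using hv)⟩

theorem exists_apply_eq_self_of_det_eq_neg_one {f : V →ₗ[ℝ] V} (hV : Even (Module.finrank ℝ V))
    (hf : f * adjoint f = 1) (hdet : LinearMap.det f = -1) : ∃ v ≠ 0, f v = v := by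
  obtain ⟨v, hv₀, hv⟩ := exists_apply_eq_neg_of_det_eq_neg_one (f := -f)
    (by rwa [map_neg, neg_mul_neg])
    (by rw [← neg_one_smul ℝ f, LinearMap.det_smul, hV.neg_one_pow, one_mul, hdet])
  exact ⟨v, hv₀, neg_injective hv⟩

end Orthogonal

/-- `x` and `y` span the two axes of the reflection `R`, and the lattice `D` consists of the
vectors `k • x + l • y` with integers `k ≡ l` modulo `d`, where `d` is `1` (`D` is rectangular) or
`2` (`D` is rhombic). -/
structure IsReflectionFrame {V : Type*} [NormedAddCommGroup V] [InnerProductSpace ℝ V]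
    (R : V ≃ₗᵢ[ℝ] V) (D : AddSubgroup V) (d : ℕ) (x y : V) : Prop where
  map_left : R x = x
  map_right : R y = -y
  left_ne_zero : x ≠ 0
  right_ne_zero : y ≠ 0
  dvd_two : d ∣ 2
  eq_congruenceLattice : D = congruenceLattice d x y

theorem inner_eq_zero_of_map_eq_neg {V : Type*} [NormedAddCommGroup V] [InnerProductSpace ℝ V]
    (R : V ≃ₗᵢ[ℝ] V) {x y : V} (hx : R x = x) (hy : R y = -y) : ⟪x, y⟫ = 0 := by
  have := R.inner_map_map x y
  rw [hx, hy, inner_neg_right] at this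
  linarith

theorem linearIndependent_pair_of_inner_eq_zero {V : Type*} [NormedAddCommGroup V]
    [InnerProductSpace ℝ V] {x y : V} (hx : x ≠ 0) (hy : y ≠ 0) (hxy : ⟪x, y⟫ = 0) :
    LinearIndependent ℝ ![x, y] := by
  refine linearIndependent_of_ne_zero_of_inner_eq_zero (𝕜 := ℝ) ?_ ?_
  · simp [Fin.forall_fin_two, hx, hy]
  · simp [Pairwise, Fin.forall_fin_two, hxy, real_inner_comm]

/-- The vectors of `Γ` on the line of `u` are exactly the integer multiples of `u`. -/
def IsPrimitiveVector {V : Type*} [AddCommGroup V] [Module ℝ V] (Γ : AddSubgroup V) (u : V) :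
    Prop :=
  ∀ t : ℝ, t • u ∈ Γ ↔ ∃ k : ℤ, t = k

theorem IsPrimitiveVector.mem {V : Type*} [AddCommGroup V] [Module ℝ V] {Γ : AddSubgroup V} {u : V}
    (hu : IsPrimitiveVector Γ u) : u ∈ Γ := by
  simpa using (hu 1).2 ⟨1, by simp⟩

theorem IsPrimitiveVector.ne_zero {V : Type*} [AddCommGroup V] [Module ℝ V]
    {Γ : AddSubgroup V} {u : V} (hu : IsPrimitiveVector Γ u) : u ≠ 0 := by
  rintro rfl
  obtain ⟨k, hk⟩ := (hu 2⁻¹).1 (by simp)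
  have : 2 * k = 1 := by
    rify
    rw [← hk]
    norm_num
  omega

theorem exists_isPrimitiveVector_smul_of_apply_ne_zero {V : Type*} [AddCommGroup V] [Module ℝ V]
    {Γ : AddSubgroup V} {φ : V →ₗ[ℝ] ℝ} (hφ : ∀ z ∈ Γ, ∃ k : ℤ, φ z = k) {v : V} (hv : v ∈ Γ)
    (hφv : φ v ≠ 0) : ∃ c : ℝ, IsPrimitiveVector Γ (c • v) := by
  let H : AddSubgroup ℝ := Γ.comap (LinearMap.toSpanSingleton ℝ V v).toAddMonoidHom
  have mem_H {t : ℝ} : t ∈ H ↔ t • v ∈ Γ := Iff.rfl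
  obtain ⟨c, hc⟩ := AddSubgroup.cyclic_of_isolated_zero (H := H) (inv_pos.2 (abs_pos.2 hφv)) <| by
    refine Set.disjoint_left.2 fun t ht ⟨ht₀, ht₁⟩ ↦ ?_
    obtain ⟨k, hk⟩ := hφ _ (mem_H.1 ht)
    rw [map_smul, smul_eq_mul] at hk
    have hk_lt : |(k : ℝ)| < 1 := by
      rwa [← hk, abs_mul, abs_of_pos ht₀, ← lt_div_iff₀ (abs_pos.2 hφv), one_div]
    have hk₀ : k = 0 := Int.abs_lt_one_iff.1 (mod_cast hk_lt)
    rw [hk₀, Int.cast_zero] at hk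
    exact mul_ne_zero ht₀.ne' hφv hk
  have hc₀ : c ≠ 0 := by
    rintro rfl
    have : (1 : ℝ) ∈ H := by rwa [mem_H, one_smul]
    rw [hc, AddSubgroup.closure_singleton_zero, AddSubgroup.mem_bot] at this
    exact one_ne_zero this
  refine ⟨c, fun t ↦ ?_⟩
  rw [smul_smul, ← mem_H, hc, AddSubgroup.mem_closure_singleton]
  refine exists_congr fun k ↦ ?_
  rw [← Int.cast_smul_eq_zsmul ℝ, smul_eq_mul, mul_left_inj' hc₀, eq_comm]

theorem IsPlanarLattice.exists_isPrimitiveVector_smul {Γ : AddSubgroup EucPlane}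
    (hΓ : IsPlanarLattice Γ) {v : EucPlane} (hv : v ∈ Γ) (hv₀ : v ≠ 0) :
    ∃ c : ℝ, IsPrimitiveVector Γ (c • v) := by
  obtain ⟨v₁, v₂, hli, rfl⟩ := hΓ
  let b := basisOfLinearIndependentOfCardEqFinrank hli (by simp)
  have hb : ⇑b = ![v₁, v₂] := coe_basisOfLinearIndependentOfCardEqFinrank hli _
  obtain ⟨i, hi⟩ : ∃ i, b.coord i v ≠ 0 := by
    contrapose! hv₀
    exact b.forall_coord_eq_zero_iff.1 hv₀
  refine exists_isPrimitiveVector_smul_of_apply_ne_zero (φ := b.coord i) (fun z hz ↦ ?_) hv hi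
  obtain ⟨m, n, rfl⟩ := mem_closure_pair_iff_intCast_smul.1 hz
  have hrepr : (m : ℝ) • v₁ + (n : ℝ) • v₂ = ∑ j, ((![m, n] j : ℤ) : ℝ) • b j := by
    simp [hb]
  exact ⟨![m, n] i, by rw [hrepr, b.coord_apply, b.repr_sum_self]⟩

theorem exists_isPrimitiveVector_apply_eq_self {Γ : AddSubgroup EucPlane} (hΓ : IsPlanarLattice Γ)
    {S : EucPlane →ₗ[ℝ] EucPlane} (hS : ∀ z, S (S z) = z) {w : EucPlane} (hw₀ : w ≠ 0)
    (hw : S w = w) {N : ℕ} (hN : N ≠ 0) (hNS : ∀ z ∈ Γ, S ((N : ℝ) • z) ∈ Γ) :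
    ∃ u, S u = u ∧ IsPrimitiveVector Γ u := by
  obtain ⟨v, hv, hSv⟩ : ∃ v ∈ Γ, S v ≠ -v := by
    by_contra! hneg
    obtain ⟨v₁, v₂, hli, rfl⟩ := hΓ
    obtain ⟨s, t, rfl⟩ := exists_eq_smul_add_smul finrank_euclideanSpace_fin hli w
    rw [map_add, map_smul, map_smul, hneg v₁ (AddSubgroup.subset_closure (by simp)),
      hneg v₂ (AddSubgroup.subset_closure (by simp)), smul_neg, smul_neg, ← neg_add] at hw
    have : IsAddTorsionFree EucPlane := .of_isTorsionFree ℝ _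
    exact hw₀ (self_eq_neg.1 hw.symm)
  have hfix : S ((N : ℝ) • (v + S v)) = (N : ℝ) • (v + S v) := by
    rw [map_smul, map_add, hS, add_comm]
  have hmem : (N : ℝ) • (v + S v) ∈ Γ := by
    rw [smul_add, ← map_smul]
    exact Γ.add_mem (by simpa using intCast_smul_mem hv N) (hNS v hv)
  have hne : (N : ℝ) • (v + S v) ≠ 0 :=
    smul_ne_zero (Nat.cast_ne_zero.2 hN) fun h ↦ hSv (eq_neg_of_add_eq_zero_right h)
  obtain ⟨c, hc⟩ := hΓ.exists_isPrimitiveVector_smul hmem hne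
  exact ⟨_, by rw [map_smul, hfix], hc⟩

variable {Γ : AddSubgroup EucPlane} {R : EucPlane ≃ₗᵢ[ℝ] EucPlane}

theorem toLinearMap_mul_adjoint (R : EucPlane ≃ₗᵢ[ℝ] EucPlane) :
    (R.toLinearEquiv : EucPlane →ₗ[ℝ] EucPlane) *
      adjoint (R.toLinearEquiv : EucPlane →ₗ[ℝ] EucPlane) = 1 := by
  rw [R.adjoint_toLinearMap_eq_symm]
  ext z : 1
  exact R.apply_symm_apply z

theorem involutive_of_map_eq_self_of_map_eq_neg {u w : EucPlane} (hu₀ : u ≠ 0) (hw₀ : w ≠ 0)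
    (hu : R u = u) (hw : R w = -w) : Function.Involutive R := by
  intro z
  obtain ⟨s, t, rfl⟩ := exists_eq_smul_add_smul finrank_euclideanSpace_fin
    (linearIndependent_pair_of_inner_eq_zero hu₀ hw₀ (inner_eq_zero_of_map_eq_neg R hu hw)) z
  simp only [map_add, map_smul, hu, hw, map_neg, neg_neg]

theorem mem_inf_latticeMap_iff (hR : Function.Involutive R) {z : EucPlane} :
    z ∈ Γ ⊓ latticeMap R Γ ↔ z ∈ Γ ∧ R z ∈ Γ := by
  refine and_congr_right fun _ ↦ ⟨?_, fun h ↦ ⟨R z, h, hR z⟩⟩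
  rintro ⟨v, hv, rfl⟩
  exact (hR v).symm ▸ hv

theorem natCast_index_smul_mem {V : Type*} [AddCommGroup V] [Module ℝ V] (D : AddSubgroup V)
    {Γ : AddSubgroup V} {z : V} (hz : z ∈ Γ) : ((D.addSubgroupOf Γ).index : ℝ) • z ∈ D := by
  rw [Nat.cast_smul_eq_nsmul]
  exact (D.addSubgroupOf Γ).nsmul_index_mem ⟨z, hz⟩

theorem IsCoincidenceReflection.exists_primitive_axes (hΓ : IsPlanarLattice Γ)
    (hR : IsCoincidenceReflection Γ R) : ∃ u w, R u = u ∧ R w = -w ∧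
      IsPrimitiveVector Γ u ∧ IsPrimitiveVector Γ w := by
  obtain ⟨hdet, hindex⟩ := hR
  obtain ⟨u₀, hu₀, hu⟩ := exists_apply_eq_self_of_det_eq_neg_one (by simp)
    (toLinearMap_mul_adjoint R) hdet
  obtain ⟨w₀, hw₀, hw⟩ := exists_apply_eq_neg_of_det_eq_neg_one (toLinearMap_mul_adjoint R) hdet
  have hinv := involutive_of_map_eq_self_of_map_eq_neg hu₀ hw₀ hu hw
  have hmem (z : EucPlane) (hz : z ∈ Γ) :=
    ((mem_inf_latticeMap_iff hinv).1 (natCast_index_smul_mem (Γ ⊓ latticeMap R Γ) hz)).2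
  obtain ⟨u, hRu, hu'⟩ := exists_isPrimitiveVector_apply_eq_self hΓ
    (S := (R.toLinearEquiv : EucPlane →ₗ[ℝ] EucPlane)) hinv hu₀ hu hindex hmem
  obtain ⟨w, hRw, hw'⟩ := exists_isPrimitiveVector_apply_eq_self hΓ
    (S := -(R.toLinearEquiv : EucPlane →ₗ[ℝ] EucPlane)) (fun z ↦ by simpa using hinv z) hw₀
    (by simpa using congrArg Neg.neg hw) hindex (fun z hz ↦ Γ.neg_mem (hmem z hz))
  exact ⟨u, w, hRu, neg_eq_iff_eq_neg.1 hRw, hu', hw'⟩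

variable {u w : EucPlane}

theorem exists_eq_half_smul_add_half_smul (hRu : R u = u) (hRw : R w = -w)
    (hu : IsPrimitiveVector Γ u) (hw : IsPrimitiveVector Γ w) {z : EucPlane} (hz : z ∈ Γ)
    (hRz : R z ∈ Γ) :
    ∃ k l : ℤ, k ≡ l [ZMOD 2] ∧ z = (k : ℝ) • (2⁻¹ : ℝ) • u + (l : ℝ) • (2⁻¹ : ℝ) • w := by
  obtain ⟨s, t, rfl⟩ := exists_eq_smul_add_smul finrank_euclideanSpace_fin
    (linearIndependent_pair_of_inner_eq_zero hu.ne_zero hw.ne_zero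
      (inner_eq_zero_of_map_eq_neg R hRu hRw)) z
  rw [map_add, map_smul, map_smul, hRu, hRw] at hRz
  obtain ⟨k, hk⟩ := (hu (2 * s)).1 <| by
    convert Γ.add_mem hz hRz using 1
    module
  obtain ⟨l, hl⟩ := (hw (2 * t)).1 <| by
    convert Γ.sub_mem hz hRz using 1
    module
  obtain rfl : s = k * 2⁻¹ := by linarith
  obtain rfl : t = l * 2⁻¹ := by linarith
  refine ⟨k, l, ?_, by simp only [mul_smul]⟩
  have even_right (hk' : Even k) : Even l := by
    obtain ⟨j, rfl⟩ := hk'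
    obtain ⟨i, hi⟩ := (hw (l * 2⁻¹)).1 <| by
      convert Γ.sub_mem hz (intCast_smul_mem hu.mem j) using 1
      push_cast
      module
    exact ⟨i, by rify; linarith⟩
  have even_left (hl' : Even l) : Even k := by
    obtain ⟨j, rfl⟩ := hl'
    obtain ⟨i, hi⟩ := (hu (k * 2⁻¹)).1 <| by
      convert Γ.sub_mem hz (intCast_smul_mem hw.mem j) using 1
      push_cast
      module
    exact ⟨i, by rify; linarith⟩
  have := Iff.intro even_right even_left
  rw [Int.even_iff, Int.even_iff] at this
  rw [Int.ModEq]
  omega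

theorem inf_latticeMap_eq_congruenceLattice_two (hRu : R u = u) (hRw : R w = -w)
    (hu : IsPrimitiveVector Γ u) (hw : IsPrimitiveVector Γ w)
    (hhalf : (2⁻¹ : ℝ) • u + (2⁻¹ : ℝ) • w ∈ Γ) :
    Γ ⊓ latticeMap R Γ = congruenceLattice 2 ((2⁻¹ : ℝ) • u) ((2⁻¹ : ℝ) • w) := by
  ext z
  rw [mem_inf_latticeMap_iff
    (involutive_of_map_eq_self_of_map_eq_neg hu.ne_zero hw.ne_zero hRu hRw),
    mem_congruenceLattice_iff]
  refine ⟨fun ⟨hz, hRz⟩ ↦ exists_eq_half_smul_add_half_smul hRu hRw hu hw hz hRz, ?_⟩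
  rintro ⟨k, l, hkl, rfl⟩
  have hz : (k : ℝ) • (2⁻¹ : ℝ) • u + (l : ℝ) • (2⁻¹ : ℝ) • w ∈ Γ := by
    obtain ⟨j, hj⟩ := hkl.dvd
    obtain rfl : l = k + 2 * j := by push_cast at hj; linarith
    convert Γ.add_mem (intCast_smul_mem hhalf k) (intCast_smul_mem hw.mem j) using 1
    push_cast
    module
  refine ⟨hz, ?_⟩
  convert Γ.sub_mem hz (intCast_smul_mem hw.mem l) using 1
  simp only [map_add, map_smul, hRu, hRw]
  module

theorem inf_latticeMap_eq_congruenceLattice_one (hRu : R u = u) (hRw : R w = -w)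
    (hu : IsPrimitiveVector Γ u) (hw : IsPrimitiveVector Γ w)
    (hhalf : (2⁻¹ : ℝ) • u + (2⁻¹ : ℝ) • w ∉ Γ) :
    Γ ⊓ latticeMap R Γ = congruenceLattice 1 u w := by
  ext z
  rw [mem_inf_latticeMap_iff
    (involutive_of_map_eq_self_of_map_eq_neg hu.ne_zero hw.ne_zero hRu hRw),
    mem_congruenceLattice_iff]
  constructor
  · rintro ⟨hz, hRz⟩
    obtain ⟨k, l, hkl, rfl⟩ := exists_eq_half_smul_add_half_smul hRu hRw hu hw hz hRz
    obtain ⟨j, hj⟩ := hkl.dvd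
    obtain rfl : l = k + 2 * j := by linarith
    rcases Int.even_or_odd' k with ⟨i, rfl | rfl⟩
    · refine ⟨i, i + j, Int.modEq_one, ?_⟩
      push_cast
      module
    · refine absurd ?_ hhalf
      convert Γ.sub_mem hz (Γ.add_mem (intCast_smul_mem hu.mem i)
        (intCast_smul_mem hw.mem (i + j))) using 1
      push_cast
      module
  · rintro ⟨k, l, -, rfl⟩
    refine ⟨Γ.add_mem (intCast_smul_mem hu.mem k) (intCast_smul_mem hw.mem l), ?_⟩
    simp only [map_add, map_smul, hRu, hRw, smul_neg]
    exact Γ.add_mem (intCast_smul_mem hu.mem k) (Γ.neg_mem (intCast_smul_mem hw.mem l))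

theorem IsCoincidenceReflection.exists_isReflectionFrame (hΓ : IsPlanarLattice Γ)
    (hR : IsCoincidenceReflection Γ R) :
    ∃ d x y, IsReflectionFrame R (Γ ⊓ latticeMap R Γ) d x y := by
  obtain ⟨u, w, hRu, hRw, hu, hw⟩ := hR.exists_primitive_axes hΓ
  by_cases hhalf : (2⁻¹ : ℝ) • u + (2⁻¹ : ℝ) • w ∈ Γ
  · exact ⟨2, (2⁻¹ : ℝ) • u, (2⁻¹ : ℝ) • w, by rw [map_smul, hRu], by rw [map_smul, hRw, smul_neg],
      smul_ne_zero (by norm_num) hu.ne_zero, smul_ne_zero (by norm_num) hw.ne_zero, dvd_rfl,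
      inf_latticeMap_eq_congruenceLattice_two hRu hRw hu hw hhalf⟩
  · exact ⟨1, u, w, hRu, hRw, hu.ne_zero, hw.ne_zero, one_dvd 2,
      inf_latticeMap_eq_congruenceLattice_one hRu hRw hu hw hhalf⟩

end ReflectionFrames

section WellRoundedSublattices

variable {Γ D Λ : AddSubgroup EucPlane} {R : EucPlane ≃ₗᵢ[ℝ] EucPlane} {d : ℕ} {x y : EucPlane}

theorem linearIndependent_rat_norm_sq_of_not_isRationalLattice (hirr : ¬IsRationalLattice Γ)
    (hx : x ≠ 0) (hxy : ⟪x, y⟫ = 0)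
    (hΓ : ∀ z ∈ Γ, ∃ s t : ℚ, z = (s : ℝ) • x + (t : ℝ) • y) :
    LinearIndependent ℚ ![‖x‖ ^ 2, ‖y‖ ^ 2] := by
  have hX : 0 < ‖x‖ ^ 2 := by positivity
  rw [LinearIndependent.pair_iff' hX.ne']
  intro q hq
  rw [Rat.smul_def] at hq
  have hyx : ⟪y, x⟫ = 0 := by rw [real_inner_comm, hxy]
  refine hirr ⟨(‖x‖ ^ 2)⁻¹, inv_pos.2 hX, fun v hv w hw ↦ ?_⟩
  obtain ⟨s, t, rfl⟩ := hΓ v hv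
  obtain ⟨s', t', rfl⟩ := hΓ w hw
  refine ⟨s * s' + t * t' * q, ?_⟩
  simp only [inner_add_left, inner_add_right, real_inner_smul_left, real_inner_smul_right, hxy,
    hyx, real_inner_self_eq_norm_sq, ← hq]
  push_cast
  field_simp
  ring

theorem sq_eq_sq_of_linearIndependent_rat {X Y : ℝ} (hXY : LinearIndependent ℚ ![X, Y])
    {s t s' t' : ℚ}
    (h : (s : ℝ) ^ 2 * X + (t : ℝ) ^ 2 * Y = (s' : ℝ) ^ 2 * X + (t' : ℝ) ^ 2 * Y) :
    s ^ 2 = s' ^ 2 ∧ t ^ 2 = t' ^ 2 :=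
  hXY.eq_of_pair (by simpa only [Rat.smul_def, Rat.cast_pow] using h)

theorem isWellRounded_congruenceLattice_two (hxy : ⟪x, y⟫ = 0) (hx : x ≠ 0) (hy : y ≠ 0)
    (h : IsMinimalVector (congruenceLattice 2 x y) (x + y)) :
    IsWellRounded (congruenceLattice 2 x y) := by
  have h' : IsMinimalVector (congruenceLattice 2 x y) (x - y) := by
    have hneg : ⟪x, -y⟫ = 0 := by rw [inner_neg_right, hxy, neg_zero]
    rw [← congruenceLattice_two_neg_right, sub_eq_add_neg,
      isMinimalVector_add_iff hneg hx (neg_ne_zero.2 hy), norm_neg]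
    exact (isMinimalVector_add_iff hxy hx hy).1 h
  have hli := (LinearIndependent.pair_add_smul_add_smul_iff (x := x) (y := y) (1 : ℝ) 1 1 (-1)).2
    ⟨linearIndependent_pair_of_inner_eq_zero hx hy hxy, by norm_num⟩
  exact isWellRounded_iff.2
    ⟨x + y, x - y, h, h', by simpa only [one_smul, neg_smul, ← sub_eq_add_neg] using hli⟩

/-- For an orthogonal pair `x, y`, the `k ≡ l` modulo `d` such that `k • x` and `l • y` are the
half diagonals of a rhombus with angles at least `π / 3`, so that its sides are shortest vectors of
the lattice they generate. One of the two boundary slopes is left out. -/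
def wellRoundedPairs (d : ℕ) (x y : EucPlane) : Set (ℕ × ℕ) :=
  sectorPairs d (‖x‖ / (√3 * ‖y‖)) (√3 * ‖x‖ / ‖y‖)

theorem mem_wellRoundedPairs_iff (hy : y ≠ 0) {k l : ℕ} :
    (k, l) ∈ wellRoundedPairs d x y ↔ 0 < k ∧ 0 < l ∧ k ≡ l [MOD d] ∧
      (k * ‖x‖) ^ 2 ≤ 3 * (l * ‖y‖) ^ 2 ∧ (l * ‖y‖) ^ 2 < 3 * (k * ‖x‖) ^ 2 := by
  have hY : 0 < ‖y‖ := norm_pos_iff.2 hy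
  have three_mul_sq (t : ℝ) : 3 * t ^ 2 = (√3 * t) ^ 2 := by
    rw [mul_pow, Real.sq_sqrt zero_le_three]
  rw [three_mul_sq, three_mul_sq, sq_le_sq₀ (by positivity) (by positivity),
    sq_lt_sq₀ (by positivity) (by positivity)]
  simp only [wellRoundedPairs, sectorPairs, Set.mem_ofPred_eq]
  rw [div_mul_eq_mul_div, div_le_iff₀ (by positivity), div_mul_eq_mul_div, lt_div_iff₀ hY]
  ring_nf

namespace IsReflectionFrame

theorem inner_eq_zero (h : IsReflectionFrame R D d x y) : ⟪x, y⟫ = 0 :=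
  inner_eq_zero_of_map_eq_neg R h.map_left h.map_right

theorem inner_smul_smul_eq_zero (h : IsReflectionFrame R D d x y) (s t : ℝ) :
    ⟪s • x, t • y⟫ = 0 := by
  rw [real_inner_smul_left, real_inner_smul_right, h.inner_eq_zero, mul_zero, mul_zero]

theorem linearIndependent (h : IsReflectionFrame R D d x y) : LinearIndependent ℝ ![x, y] :=
  linearIndependent_pair_of_inner_eq_zero h.left_ne_zero h.right_ne_zero h.inner_eq_zero

theorem exists_rat_coordinates (h : IsReflectionFrame R D d x y)
    (hD : (D.addSubgroupOf Γ).index ≠ 0) {z : EucPlane} (hz : z ∈ Γ) :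
    ∃ s t : ℚ, z = (s : ℝ) • x + (t : ℝ) • y := by
  have hmem := natCast_index_smul_mem D hz
  set N := (D.addSubgroupOf Γ).index
  rw [h.eq_congruenceLattice] at hmem
  obtain ⟨k, l, -, hkl⟩ := mem_congruenceLattice_iff.1 hmem
  refine ⟨k / N, l / N, ?_⟩
  rw [← inv_smul_smul₀ (Nat.cast_ne_zero.2 hD : (N : ℝ) ≠ 0) z, hkl]
  push_cast
  module

theorem map_eq_or_eq_neg (h : IsReflectionFrame R D d x y) (hD : (D.addSubgroupOf Γ).index ≠ 0)
    (hXY : LinearIndependent ℚ ![‖x‖ ^ 2, ‖y‖ ^ 2]) {a b : EucPlane} (ha : a ∈ Γ) (hb : b ∈ Γ)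
    (hnorm : ‖a‖ = ‖b‖) (hab : LinearIndependent ℝ ![a, b]) : R a = b ∨ R a = -b := by
  obtain ⟨s, t, rfl⟩ := h.exists_rat_coordinates hD ha
  obtain ⟨s', t', rfl⟩ := h.exists_rat_coordinates hD hb
  have hsq := congrArg (· ^ 2) hnorm
  simp only [norm_smul_add_smul_sq_of_inner_eq_zero h.inner_eq_zero] at hsq
  obtain ⟨hs, ht⟩ := sq_eq_sq_of_linearIndependent_rat hXY hsq
  have hne (c : ℝ) : c • ((s : ℝ) • x + (t : ℝ) • y) ≠ (s' : ℝ) • x + (t' : ℝ) • y :=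
    (LinearIndependent.pair_iff' (hab.ne_zero 0)).1 hab c
  rw [map_add, map_smul, map_smul, h.map_left, h.map_right]
  rcases sq_eq_sq_iff_eq_or_eq_neg.1 hs with rfl | rfl <;>
    rcases sq_eq_sq_iff_eq_or_eq_neg.1 ht with rfl | rfl
  · exact absurd (one_smul ℝ _) (hne 1)
  · left; push_cast; module
  · right; push_cast; module
  · exact absurd (by push_cast; module) (hne (-1))

theorem congruenceLattice_two_smul_le (h : IsReflectionFrame R (Γ ⊓ latticeMap R Γ) d x y) {k l : ℕ}
    (hkl : k ≡ l [MOD d]) : congruenceLattice 2 ((k : ℝ) • x) ((l : ℝ) • y) ≤ Γ :=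
  (congruenceLattice_smul_le hkl h.dvd_two).trans (h.eq_congruenceLattice ▸ inf_le_left)

theorem natAbs_modEq_natAbs_iff (h : IsReflectionFrame R D d x y) {k l : ℤ} :
    k.natAbs ≡ l.natAbs [MOD d] ↔ k ≡ l [ZMOD d] := by
  rcases (Nat.dvd_prime Nat.prime_two).1 h.dvd_two with rfl | rfl
  · simp only [Nat.modEq_one, Nat.cast_one, Int.modEq_one]
  · rw [Nat.ModEq, Int.ModEq]
    omega

theorem isMinimalVector_iff_mem_wellRoundedPairs (h : IsReflectionFrame R D d x y)
    (hXY : LinearIndependent ℚ ![‖x‖ ^ 2, ‖y‖ ^ 2]) {k l : ℤ} (hk : k ≠ 0) (hl : l ≠ 0)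
    (hkl : k ≡ l [ZMOD d]) :
    IsMinimalVector (congruenceLattice 2 ((k : ℝ) • x) ((l : ℝ) • y)) ((k : ℝ) • x + (l : ℝ) • y) ↔
      (k.natAbs, l.natAbs) ∈ wellRoundedPairs d x y := by
  have hkx : (k : ℝ) • x ≠ 0 := smul_ne_zero (mod_cast hk) h.left_ne_zero
  have hly : (l : ℝ) • y ≠ 0 := smul_ne_zero (mod_cast hl) h.right_ne_zero
  -- The boundary slope left out of `wellRoundedPairs` is never attained.
  have hne : (|(l : ℝ)| * ‖y‖) ^ 2 ≠ 3 * (|(k : ℝ)| * ‖x‖) ^ 2 := fun heq ↦ by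
    rw [mul_pow, mul_pow, sq_abs, sq_abs] at heq
    have hrel : (3 * (k : ℚ) ^ 2) • ‖x‖ ^ 2 + (-(l : ℚ) ^ 2) • ‖y‖ ^ 2 = 0 := by
      simp only [Rat.smul_def]
      push_cast
      linear_combination -heq
    exact hl (by simpa using (LinearIndependent.pair_iff.1 hXY _ _ hrel).2)
  rw [isMinimalVector_add_iff (h.inner_smul_smul_eq_zero _ _) hkx hly, norm_smul, norm_smul,
    Real.norm_eq_abs, Real.norm_eq_abs, hne.le_iff_lt,
    mem_wellRoundedPairs_iff h.right_ne_zero, h.natAbs_modEq_natAbs_iff]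
  simp [hk, hl, hkl]

theorem exists_mem_wellRoundedPairs_of_isWellRounded
    (h : IsReflectionFrame R (Γ ⊓ latticeMap R Γ) d x y)
    (hindex : ((Γ ⊓ latticeMap R Γ).addSubgroupOf Γ).index ≠ 0)
    (hXY : LinearIndependent ℚ ![‖x‖ ^ 2, ‖y‖ ^ 2]) (hΛ : Λ ≤ Γ) (hwr : IsWellRounded Λ) :
    ∃ p ∈ wellRoundedPairs d x y,
      congruenceLattice 2 ((p.1 : ℝ) • x) ((p.2 : ℝ) • y) = Λ := by
  obtain ⟨a, b, ha, hb, hab⟩ := isWellRounded_iff.1 hwr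
  have hR := involutive_of_map_eq_self_of_map_eq_neg h.left_ne_zero h.right_ne_zero h.map_left
    h.map_right
  have hRa : R a ∈ Λ ∧ LinearIndependent ℝ ![a, R a] := by
    rcases h.map_eq_or_eq_neg hindex hXY (hΛ ha.mem) (hΛ hb.mem) (ha.norm_eq hb) hab with heq | heq
    · exact heq ▸ ⟨hb.mem, hab⟩
    · exact heq ▸ ⟨Λ.neg_mem hb.mem, LinearIndependent.pair_neg_right_iff.2 hab⟩
  have hRa_min : IsMinimalVector Λ (R a) :=
    ⟨hRa.1, hRa.2.ne_zero 1, by simpa only [R.norm_map] using ha.norm_le⟩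
  have hΛ_eq := ha.eq_closure_pair finrank_euclideanSpace_fin hRa_min hRa.2
  have haD : a ∈ Γ ⊓ latticeMap R Γ := (mem_inf_latticeMap_iff hR).2 ⟨hΛ ha.mem, hΛ hRa.1⟩
  rw [h.eq_congruenceLattice] at haD
  obtain ⟨k, l, hkl, rfl⟩ := mem_congruenceLattice_iff.1 haD
  have hmap : R ((k : ℝ) • x + (l : ℝ) • y) = (k : ℝ) • x - (l : ℝ) • y := by
    rw [map_add, map_smul, map_smul, h.map_left, h.map_right, smul_neg, sub_eq_add_neg]
  have hne := (LinearIndependent.pair_iff' ha.ne_zero).1 hRa.2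
  rw [hmap] at hΛ_eq hne
  have hk : k ≠ 0 := by
    rintro rfl
    exact hne (-1) (by push_cast; module)
  have hl : l ≠ 0 := by
    rintro rfl
    exact hne 1 (by push_cast; module)
  rw [closure_add_sub_eq_congruenceLattice] at hΛ_eq
  refine ⟨(k.natAbs, l.natAbs), ?_, ?_⟩
  · exact (h.isMinimalVector_iff_mem_wellRoundedPairs hXY hk hl hkl).1 (hΛ_eq ▸ ha)
  · rw [congruenceLattice_two_natAbs_smul, hΛ_eq]

theorem isMinimalVector_of_mem_wellRoundedPairs (h : IsReflectionFrame R D d x y)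
    (hXY : LinearIndependent ℚ ![‖x‖ ^ 2, ‖y‖ ^ 2]) {p : ℕ × ℕ}
    (hp : p ∈ wellRoundedPairs d x y) :
    IsMinimalVector (congruenceLattice 2 ((p.1 : ℝ) • x) ((p.2 : ℝ) • y))
      ((p.1 : ℝ) • x + (p.2 : ℝ) • y) := by
  simpa only [Int.cast_natCast] using
    (h.isMinimalVector_iff_mem_wellRoundedPairs hXY (k := p.1) (l := p.2)
      (mod_cast hp.1.ne') (mod_cast hp.2.1.ne') (Int.natCast_modEq_iff.2 hp.2.2.1)).2 (by simpa)

theorem setOf_isWellRounded_eq_image (h : IsReflectionFrame R (Γ ⊓ latticeMap R Γ) d x y)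
    (hindex : ((Γ ⊓ latticeMap R Γ).addSubgroupOf Γ).index ≠ 0)
    (hXY : LinearIndependent ℚ ![‖x‖ ^ 2, ‖y‖ ^ 2]) :
    {Λ | Λ ≤ Γ ∧ IsWellRounded Λ} =
      (fun p : ℕ × ℕ ↦ congruenceLattice 2 ((p.1 : ℝ) • x) ((p.2 : ℝ) • y)) ''
        wellRoundedPairs d x y := by
  refine Set.Subset.antisymm
    (fun Λ hΛ ↦ h.exists_mem_wellRoundedPairs_of_isWellRounded hindex hXY hΛ.1 hΛ.2) ?_
  rintro _ ⟨p, hp, rfl⟩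
  exact ⟨h.congruenceLattice_two_smul_le hp.2.2.1,
    isWellRounded_congruenceLattice_two (h.inner_smul_smul_eq_zero _ _)
      (smul_ne_zero (mod_cast hp.1.ne') h.left_ne_zero)
      (smul_ne_zero (mod_cast hp.2.1.ne') h.right_ne_zero)
      (h.isMinimalVector_of_mem_wellRoundedPairs hXY hp)⟩

theorem injOn_congruenceLattice_smul (h : IsReflectionFrame R D d x y)
    (hXY : LinearIndependent ℚ ![‖x‖ ^ 2, ‖y‖ ^ 2]) :
    Set.InjOn (fun p : ℕ × ℕ ↦ congruenceLattice 2 ((p.1 : ℝ) • x) ((p.2 : ℝ) • y))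
      (wellRoundedPairs d x y) := by
  intro p hp q hq hpq
  dsimp only at hpq
  have hpq_norm : ‖(p.1 : ℝ) • x + (p.2 : ℝ) • y‖ = ‖(q.1 : ℝ) • x + (q.2 : ℝ) • y‖ :=
    (h.isMinimalVector_of_mem_wellRoundedPairs hXY hp).norm_eq
      (hpq ▸ h.isMinimalVector_of_mem_wellRoundedPairs hXY hq)
  have hsq := congrArg (· ^ 2) hpq_norm
  simp only [norm_smul_add_smul_sq_of_inner_eq_zero h.inner_eq_zero] at hsq
  obtain ⟨h₁, h₂⟩ := sq_eq_sq_of_linearIndependent_rat hXY (s := p.1) (t := p.2) (s' := q.1)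
    (t' := q.2) (mod_cast hsq)
  exact Prod.ext (Nat.pow_left_injective two_ne_zero (mod_cast h₁))
    (Nat.pow_left_injective two_ne_zero (mod_cast h₂))

theorem relIndex_congruenceLattice_two_smul (h : IsReflectionFrame R D d x y) {k l : ℕ}
    (hkl : k ≡ l [MOD d]) (hk : k ≠ 0) (hl : l ≠ 0) :
    (congruenceLattice 2 ((k : ℝ) • x) ((l : ℝ) • y)).relIndex D = 2 / d * (k * l) := by
  have hd : 0 < d := Nat.pos_of_dvd_of_pos h.dvd_two two_pos
  have hle := congruenceLattice_smul_le (x := x) (y := y) hkl h.dvd_two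
  have hle_closure : congruenceLattice d x y ≤ AddSubgroup.closure {x, y} := fun z hz ↦ by
    obtain ⟨k, l, -, hz⟩ := mem_congruenceLattice_iff.1 hz
    exact mem_closure_pair_iff_intCast_smul.2 ⟨k, l, hz⟩
  have hD := relIndex_congruenceLattice_smul h.linearIndependent hd.ne' one_ne_zero one_ne_zero
  have hmul := AddSubgroup.relIndex_mul_relIndex _ _ _ hle hle_closure
  simp only [Nat.cast_one, one_smul, mul_one] at hD
  rw [relIndex_congruenceLattice_smul h.linearIndependent two_ne_zero hk hl, hD] at hmul
  rw [h.eq_congruenceLattice]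
  refine Nat.eq_of_mul_eq_mul_right hd (hmul.trans ?_)
  rw [mul_right_comm, Nat.div_mul_cancel h.dvd_two]

theorem countWR_eq_ncard (h : IsReflectionFrame R (Γ ⊓ latticeMap R Γ) d x y)
    (hindex : ((Γ ⊓ latticeMap R Γ).addSubgroupOf Γ).index ≠ 0)
    (hXY : LinearIndependent ℚ ![‖x‖ ^ 2, ‖y‖ ^ 2]) (n : ℕ) :
    countWR Γ n = {p ∈ wellRoundedPairs d x y |
      2 / d * ((Γ ⊓ latticeMap R Γ).addSubgroupOf Γ).index * (p.1 * p.2) = n}.ncard := by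
  have hcount :
      countWR Γ n = ({Λ | Λ ≤ Γ ∧ IsWellRounded Λ} ∩ {Λ | Λ.relIndex Γ = n}).ncard := by
    simp only [← Set.ofPred_and, and_assoc]
    rfl
  rw [hcount, h.setOf_isWellRounded_eq_image hindex hXY, ← Set.image_inter_preimage,
    ((h.injOn_congruenceLattice_smul hXY).mono Set.inter_subset_left).ncard_image]
  refine congrArg Set.ncard (Set.ext fun p ↦ and_congr_right fun hp ↦ ?_)
  rw [Set.mem_preimage, Set.mem_ofPred_eq, ← AddSubgroup.relIndex_mul_relIndex _ _ _
    ((congruenceLattice_smul_le hp.2.2.1 h.dvd_two).trans_eq h.eq_congruenceLattice.symm)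
    inf_le_left, h.relIndex_congruenceLattice_two_smul hp.2.2.1 hp.1.ne' hp.2.1.ne',
    AddSubgroup.relIndex, mul_right_comm]

theorem sum_countWR_sub_isBigO (h : IsReflectionFrame R (Γ ⊓ latticeMap R Γ) d x y)
    (hindex : ((Γ ⊓ latticeMap R Γ).addSubgroupOf Γ).index ≠ 0)
    (hXY : LinearIndependent ℚ ![‖x‖ ^ 2, ‖y‖ ^ 2]) :
    (fun n : ℕ ↦ ∑ m ∈ Finset.Icc 1 n, (countWR Γ m : ℝ) -
      Real.log 3 / (4 * (((Γ ⊓ latticeMap R Γ).addSubgroupOf Γ).index : ℝ)) * n) =O[atTop]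
      fun n ↦ (n : ℝ) ^ (1 / 2 : ℝ) := by
  have hd : 0 < d := Nat.pos_of_dvd_of_pos h.dvd_two two_pos
  have hx : 0 < ‖x‖ := norm_pos_iff.2 h.left_ne_zero
  have hy : 0 < ‖y‖ := norm_pos_iff.2 h.right_ne_zero
  have hslopes : √3 * ‖x‖ / ‖y‖ = 3 * (‖x‖ / (√3 * ‖y‖)) := by
    field_simp
    exact Real.sq_sqrt zero_le_three
  have hα : 0 < ‖x‖ / (√3 * ‖y‖) := by positivity
  have he : 0 < 2 / d * ((Γ ⊓ latticeMap R Γ).addSubgroupOf Γ).index :=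
    Nat.mul_pos (Nat.div_pos (Nat.le_of_dvd two_pos h.dvd_two) hd) hindex.bot_lt
  have hsum := sum_ncard_sectorPairs_sub_isBigO hd he hα
    (show ‖x‖ / (√3 * ‖y‖) ≤ √3 * ‖x‖ / ‖y‖ by linarith)
  have hconst : (2 : ℝ) * d * ↑(2 / d * ((Γ ⊓ latticeMap R Γ).addSubgroupOf Γ).index) =
      4 * ((Γ ⊓ latticeMap R Γ).addSubgroupOf Γ).index := by
    rw [Nat.cast_mul, Nat.cast_div h.dvd_two (by positivity), Nat.cast_ofNat]
    field_simp
    norm_num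
  rw [hconst] at hsum
  simpa only [h.countWR_eq_ncard hindex hXY, wellRoundedPairs, hslopes,
    mul_div_cancel_right₀ (3 : ℝ) hα.ne'] using hsum

end IsReflectionFrame

end WellRoundedSublattices

theorem non_rational_wellRounded_dirichlet_series_continuation
    (Γ : AddSubgroup EucPlane) (hΓ : IsPlanarLattice Γ)
    (hirr : ¬ IsRationalLattice Γ)
    (hwr : ∃ Λ : AddSubgroup EucPlane, Λ ≤ Γ ∧ (Λ.addSubgroupOf Γ).index ≠ 0 ∧
      IsWellRounded Λ)
    (R : EucPlane ≃ₗᵢ[ℝ] EucPlane) (hR : IsCoincidenceReflection Γ R) :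
    (∀ s : ℂ, 1 < s.re → Summable (fun n : ℕ => (countWR Γ n : ℂ) * (n : ℂ) ^ (-s))) ∧
    ∃ G : ℂ → ℂ, DifferentiableOn ℂ G {s : ℂ | 1 / 2 < s.re} ∧
      ∀ s : ℂ, 1 < s.re →
        ∑' n : ℕ, (countWR Γ n : ℂ) * (n : ℂ) ^ (-s) =
          G s + (Real.log 3 / (4 * (((Γ ⊓ latticeMap R Γ).addSubgroupOf Γ).index : ℝ)) : ℂ) /
            (s - 1) := by
  obtain ⟨d, x, y, h⟩ := hR.exists_isReflectionFrame hΓ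
  have hXY := linearIndependent_rat_norm_sq_of_not_isRationalLattice hirr h.left_ne_zero
    h.inner_eq_zero fun _ ↦ h.exists_rat_coordinates hR.2
  have hsum := h.sum_countWR_sub_isBigO hR.2 hXY
  simpa only [Complex.ofReal_div, Complex.ofReal_mul, Complex.ofReal_ofNat] using
    dirichletSeries_summable_and_continuation (by norm_num) (by norm_num) hsum
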